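/- arXiv:1604.03815 — 2 statements merged into one kernel-verified Lean document; each statement's English description precedes it below -/
import Mathlib

section
/- Let T be an invertible symmetric 3×3 real matrix and define the density J(n) = N_T / (nᵀ T⁻² n)² on the unit sphere S², where N_T > 0 is chosen so that ∫_{S²} J(n) dS(n) = 1. Then for every unit vector n₀, ∫_{S²} J(n) 1_{n₀·n > 0} n dS(n) = π N_T |det T| · T² n₀ / √(n₀ᵀ T² n₀). -/
open MeasureTheory RealInnerProductSpace


/-- One-dimensional factors of the half-space Gaussian moments. -/
noncomputable def gfac (j i : Fin 3) (t : ℝ) : ℝ :=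
  (if i = 0 then Set.indicator (Set.Ioi 0) (fun _ => (1:ℝ)) t else 1) *
    ((if i = j then t else 1) * Real.exp (-1 * t ^ 2))

lemma gfac_integrable (j i : Fin 3) : Integrable (gfac j i) := by
  have h : Integrable (fun t : ℝ => (if i = j then t else 1) * Real.exp (-1 * t ^ 2)) := by
    split_ifs
    · exact integrable_mul_exp_neg_mul_sq one_pos
    · simpa using integrable_exp_neg_mul_sq (b := 1) one_pos
  by_cases hi : i = 0
  · have := h.indicator (measurableSet_Ioi (a := (0:ℝ)))
    refine this.congr (Filter.Eventually.of_forall fun t => ?_)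
    by_cases ht : t ∈ Set.Ioi (0:ℝ) <;> simp [gfac, hi, ht]
  · refine h.congr (Filter.Eventually.of_forall fun t => ?_)
    simp [gfac, hi]

lemma real_moment3 {b : ℝ} (hb : 0 < b) :
    ∫ r in Set.Ioi (0:ℝ), r ^ 3 * Real.exp (-b * r ^ 2) = 1 / (2 * b ^ 2) := by
  have := integral_rpow_mul_exp_neg_mul_rpow (p := 2) (q := 3) (b := b) (by norm_num) (by norm_num) hb
  have h2 : Real.Gamma 2 = 1 := by
    simp
  have e : b ^ (-(3 + 1 : ℝ) / 2) = (b ^ 2)⁻¹ := by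
    rw [show (-(3 + 1 : ℝ) / 2) = -((2:ℕ) : ℝ) by norm_num, Real.rpow_neg hb.le, Real.rpow_natCast]
  rw [e, show ((3:ℝ) + 1) / 2 = 2 by norm_num, h2] at this
  norm_cast at this
  rw [this]
  ring

lemma gfac_zero_zero : ∫ t, gfac 0 0 t = 1 / 2 := by
  have := integral_rpow_mul_exp_neg_mul_rpow (p := 2) (q := 1) (b := 1) (by norm_num) (by norm_num) one_pos
  rw [show ((1:ℝ) + 1) / 2 = 1 by norm_num, Real.Gamma_one] at this
  norm_num at this
  rw [← this, ← integral_indicator measurableSet_Ioi]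
  refine integral_congr_ae (Filter.Eventually.of_forall fun t => ?_)
  by_cases ht : 0 < t <;> simp [gfac, ht]

lemma gfac_gauss {i : Fin 3} (hi : i ≠ 0) : ∫ t, gfac 0 i t = √Real.pi := by
  have := integral_gaussian 1
  simpa [gfac, hi] using this

lemma gfac_odd {i : Fin 3} (hi : i ≠ 0) : ∫ t, gfac i i t = 0 := by
  have h := integral_neg_eq_self (gfac i i) volume
  have h2 : ∀ t, gfac i i (-t) = - gfac i i t := by intro t; simp [gfac, hi]
  simp_rw [h2, integral_neg] at h
  linarith

/-- The half-space Gaussian vector field. -/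
noncomputable def hg (m y : (EuclideanSpace ℝ (Fin 3))) : (EuclideanSpace ℝ (Fin 3)) :=
  (if 0 < ⟪m, y⟫ then Real.exp (-‖y‖ ^ 2) else 0) • y

lemma hg_coord (j : Fin 3) (y : (EuclideanSpace ℝ (Fin 3))) :
    hg (EuclideanSpace.single 0 1) y j = ∏ i, gfac j i (y i) := by
  have hn : ‖y‖ ^ 2 = y 0 ^ 2 + y 1 ^ 2 + y 2 ^ 2 := by
    rw [EuclideanSpace.real_norm_sq_eq, Fin.sum_univ_three]
  have hin : ⟪(EuclideanSpace.single 0 1 : (EuclideanSpace ℝ (Fin 3))), y⟫ = y 0 := by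
    simp [EuclideanSpace.inner_single_left]
  unfold hg
  rw [hin, hn, Fin.prod_univ_three]
  rw [show -(y 0 ^ 2 + y 1 ^ 2 + y 2 ^ 2) = -1 * y 0 ^ 2 + -1 * y 1 ^ 2 + -1 * y 2 ^ 2 by ring,
    Real.exp_add, Real.exp_add]
  by_cases h : 0 < y 0 <;> fin_cases j <;> simp [gfac, h] <;> ring

lemma hg_coord_integrable (j : Fin 3) :
    Integrable (fun y : (EuclideanSpace ℝ (Fin 3)) => hg (EuclideanSpace.single 0 1) y j) := by
  simp_rw [hg_coord]
  have h := Integrable.fintype_prod (μ := fun _ : Fin 3 => (volume : Measure ℝ))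
    (f := gfac j) (gfac_integrable j)
  exact (PiLp.volume_preserving_ofLp (Fin 3)).integrable_comp_of_integrable h

lemma hg_integrable0 : Integrable (hg (EuclideanSpace.single 0 1)) :=
  Integrable.of_eval_piLp hg_coord_integrable

lemma hg_integral0 : ∫ y, hg (EuclideanSpace.single 0 1) y
    = (Real.pi / 2) • (EuclideanSpace.single 0 1 : (EuclideanSpace ℝ (Fin 3))) := by
  ext j
  rw [eval_integral_piLp hg_coord_integrable]
  simp_rw [hg_coord]
  have h := (EuclideanSpace.volume_preserving_symm_measurableEquiv_toLp (Fin 3)).integral_comp'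
    (fun x : Fin 3 → ℝ => ∏ i, gfac j i (x i))
  have h2 := integral_fintype_prod_volume_eq_prod (fun i : Fin 3 => gfac j i)
  refine (h.trans h2).trans ?_
  rw [Fin.prod_univ_three]
  fin_cases j
  · simp only [Fin.zero_eta, gfac_zero_zero]
    rw [gfac_gauss (by decide), gfac_gauss (by decide)]
    have := Real.mul_self_sqrt Real.pi_pos.le
    simp
    linarith
  · have := gfac_odd (i := 1) (by decide)
    simp [this]
  · have := gfac_odd (i := 2) (by decide)
    simp [this]

lemma hg_smul {c : ℝ} (hc : 0 < c) (m : (EuclideanSpace ℝ (Fin 3))) : hg (c • m) = hg m := by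
  funext y
  simp [hg, inner_smul_left, hc]

lemma hg_full {m : (EuclideanSpace ℝ (Fin 3))} (hm : m ≠ 0) : Integrable (hg m) ∧
    ∫ y, hg m y = (Real.pi / 2 / ‖m‖) • m := by
  have hm' : 0 < ‖m‖ := norm_pos_iff.2 hm
  set u : (EuclideanSpace ℝ (Fin 3)) := ‖m‖⁻¹ • m with hu
  have hu1 : ‖u‖ = 1 := by simp [hu, norm_smul, hm]
  have hgu : hg u = hg m := hg_smul (by positivity) m
  obtain ⟨R, hR⟩ : ∃ R : (EuclideanSpace ℝ (Fin 3)) ≃ₗᵢ[ℝ] (EuclideanSpace ℝ (Fin 3)), R (EuclideanSpace.single 0 1) = u :=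
    ⟨_, Submodule.reflection_sub (by simp [hu1])⟩
  have hRe : ∀ y, hg u (R y) = R (hg (EuclideanSpace.single 0 1) y) := by
    intro y
    simp only [hg, ← hR, R.inner_map_map, R.norm_map, map_smul]
  have hmp := R.measurePreserving
  have hme : MeasurableEmbedding R := R.toHomeomorph.measurableEmbedding
  have hi : Integrable (hg u) := by
    rw [← hmp.integrable_comp_emb hme]
    have := R.toContinuousLinearEquiv.toContinuousLinearMap.integrable_comp hg_integrable0
    refine this.congr (Filter.Eventually.of_forall fun y => ?_)
    simp [hRe]
  rw [← hgu]
  refine ⟨hi, ?_⟩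
  rw [← hmp.integral_comp hme]
  simp_rw [hRe]
  have := R.toContinuousLinearEquiv.toContinuousLinearMap.integral_comp_comm hg_integrable0
  simp at this
  rw [this, hg_integral0, map_smul, hR, hu, smul_smul]
  rfl

lemma polar3 (F : (EuclideanSpace ℝ (Fin 3)) → (EuclideanSpace ℝ (Fin 3))) (hF : Integrable F) :
    ∫ x, F x = ∫ n, (∫ r in Set.Ioi (0:ℝ), r ^ 2 • F (r • (n : (EuclideanSpace ℝ (Fin 3)))))
      ∂(volume : Measure (EuclideanSpace ℝ (Fin 3))).toSphere := by
  have mp := (volume : Measure (EuclideanSpace ℝ (Fin 3))).measurePreserving_homeomorphUnitSphereProd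
  have emb := (homeomorphUnitSphereProd (EuclideanSpace ℝ (Fin 3))).measurableEmbedding
  set G : Metric.sphere (0 : (EuclideanSpace ℝ (Fin 3))) 1 × Set.Ioi (0:ℝ) → (EuclideanSpace ℝ (Fin 3)) := fun p => F ((p.2 : ℝ) • (p.1 : (EuclideanSpace ℝ (Fin 3)))) with hG
  have hcomp : ∀ x : ({0}ᶜ : Set (EuclideanSpace ℝ (Fin 3))), G (homeomorphUnitSphereProd (EuclideanSpace ℝ (Fin 3)) x) = F x := by
    intro x
    have hx : ‖(x : (EuclideanSpace ℝ (Fin 3)))‖ ≠ 0 := norm_ne_zero_iff.2 x.2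
    simp [hG, smul_smul, hx]
  have h1 : ∫ x, F x = ∫ x : ({0}ᶜ : Set (EuclideanSpace ℝ (Fin 3))), F x ∂((volume : Measure (EuclideanSpace ℝ (Fin 3))).comap (↑)) := by
    rw [integral_subtype_comap (measurableSet_singleton _).compl F, restrict_compl_singleton]
  have h2 := mp.integral_comp emb G
  have h3 : Integrable G ((volume : Measure (EuclideanSpace ℝ (Fin 3))).toSphere.prod
      (.volumeIoiPow (Module.finrank ℝ (EuclideanSpace ℝ (Fin 3)) - 1))) := by
    rw [← mp.integrable_comp_emb emb]
    have : Integrable (fun x : ({0}ᶜ : Set (EuclideanSpace ℝ (Fin 3))) => F x) ((volume : Measure (EuclideanSpace ℝ (Fin 3))).comap (↑)) := by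
      have := (integrableOn_iff_comap_subtypeVal (μ := volume)
        (measurableSet_singleton (0:(EuclideanSpace ℝ (Fin 3)))).compl).1 hF.integrableOn
      exact this
    refine this.congr (Filter.Eventually.of_forall fun y => ?_)
    simp [hcomp]
  simp_rw [hcomp] at h2
  rw [h1, h2, integral_prod _ h3]
  refine integral_congr_ae (Filter.Eventually.of_forall fun n => ?_)
  simp only [Measure.volumeIoiPow, ENNReal.ofReal, hG]
  rw [integral_withDensity_eq_integral_smul,
    integral_subtype_comap measurableSet_Ioi fun a : ℝ =>
      Real.toNNReal (a ^ (Module.finrank ℝ (EuclideanSpace ℝ (Fin 3)) - 1)) • F (a • (n : (EuclideanSpace ℝ (Fin 3))))]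
  · refine setIntegral_congr_fun measurableSet_Ioi fun r hr => ?_
    have hr' : (0:ℝ) < r := hr
    simp only [finrank_euclideanSpace, Fintype.card_fin]
    rw [NNReal.smul_def, Real.coe_toNNReal _ (by positivity)]
  · fun_prop

theorem stmt7 (T : Matrix (Fin 3) (Fin 3) ℝ) (hT : IsUnit T.det) (hTsymm : T.IsSymm
    )
    (N : ℝ) (hN : 0 < N)
    (J : Metric.sphere (0 : EuclideanSpace ℝ (Fin 3)) 1 → ℝ)
    (hJ : ∀ n, J n = N / (⟪(n : EuclideanSpace ℝ (Fin 3)),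
        Matrix.toEuclideanLin (T⁻¹ * T⁻¹) (n : EuclideanSpace ℝ (Fin 3))⟫)^2)
    (hnorm : ∫ n, J n ∂(volume : Measure (EuclideanSpace ℝ (Fin 3))).toSphere = 1)
    (n₀ : Metric.sphere (0 : EuclideanSpace ℝ (Fin 3)) 1) :
    ∫ n, (Set.indicator
          {p : Metric.sphere (0 : EuclideanSpace ℝ (Fin 3)) 1 |
            0 < ⟪(n₀ : EuclideanSpace ℝ (Fin 3)), (p : EuclideanSpace ℝ (Fin 3))⟫}
          J n) • (n : EuclideanSpace ℝ (Fin 3))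
        ∂(volume : Measure (EuclideanSpace ℝ (Fin 3))).toSphere
      = (Real.pi * N * |T.det| /
          Real.sqrt (⟪(n₀ : EuclideanSpace ℝ (Fin 3)),
            Matrix.toEuclideanLin (T * T) (n₀ : EuclideanSpace ℝ (Fin 3))⟫)) •
        Matrix.toEuclideanLin (T * T) (n₀ : EuclideanSpace ℝ (Fin 3)) := by
  set A : (EuclideanSpace ℝ (Fin 3)) →ₗ[ℝ] (EuclideanSpace ℝ (Fin 3)) := Matrix.toEuclideanLin T with hA
  set B : (EuclideanSpace ℝ (Fin 3)) →ₗ[ℝ] (EuclideanSpace ℝ (Fin 3)) := Matrix.toEuclideanLin T⁻¹ with hB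
  have hAA : ∀ x, Matrix.toEuclideanLin (T * T) x = A (A x) := by
    intro x; simp [hA, Matrix.toLpLin_mul_same]
  have hBB : ∀ x, Matrix.toEuclideanLin (T⁻¹ * T⁻¹) x = B (B x) := by
    intro x; simp [hB, Matrix.toLpLin_mul_same]
  have hAB : ∀ x, A (B x) = x := by
    intro x
    have : A (B x) = Matrix.toEuclideanLin (T * T⁻¹) x := by
      simp [hA, hB, Matrix.toLpLin_mul_same]
    rw [this, Matrix.mul_nonsing_inv _ hT]; simp
  have hBA : ∀ x, B (A x) = x := by
    intro x
    have : B (A x) = Matrix.toEuclideanLin (T⁻¹ * T) x := by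
      simp [hA, hB, Matrix.toLpLin_mul_same]
    rw [this, Matrix.nonsing_inv_mul _ hT]; simp
  have hAs : A.IsSymmetric := by
    rw [hA, Matrix.isSymmetric_toEuclideanLin_iff]
    rw [Matrix.IsHermitian, Matrix.conjTranspose_eq_transpose_of_trivial]
    exact hTsymm
  have hBs : B.IsSymmetric := by
    intro x y
    rw [← hAB y, hBA, ← hAs, hAB]
  have hdet : LinearMap.det A = T.det := by simp [hA]
  have hd0 : T.det ≠ 0 := hT.ne_zero
  have hn0 : (n₀ : (EuclideanSpace ℝ (Fin 3))) ≠ 0 := by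
    intro h; have := n₀.2; simp [h] at this
  set m : (EuclideanSpace ℝ (Fin 3)) := A n₀ with hm
  have hm0 : m ≠ 0 := by
    intro h; apply hn0; rw [← hBA n₀, ← hm, h, map_zero]
  obtain ⟨hi, hI⟩ := hg_full hm0
  set F : (EuclideanSpace ℝ (Fin 3)) → (EuclideanSpace ℝ (Fin 3)) := fun x => A (hg m (B x)) with hF
  have hAhg : Integrable (fun y => A (hg m y)) :=
    A.toContinuousLinearMap.integrable_comp hi
  have hAI : ∫ y, A (hg m y) = A (∫ y, hg m y) :=
    A.toContinuousLinearMap.integral_comp_comm hi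
  have hdet' : LinearMap.det A ≠ 0 := by rw [hdet]; exact hd0
  have hmap := Measure.map_linearMap_addHaar_eq_smul_addHaar (volume : Measure (EuclideanSpace ℝ (Fin 3))) hdet'
  have hFA : ∀ y, F (A y) = A (hg m y) := by intro y; simp [hF, hBA]
  have hAemb : MeasurableEmbedding A :=
    ((LinearMap.equivOfDetNeZero A hdet').toContinuousLinearEquiv.toHomeomorph).measurableEmbedding
  have hFi : Integrable F := by
    have h : Integrable F (Measure.map A volume) := by
      rw [hAemb.integrable_map_iff]
      refine hAhg.congr (Filter.Eventually.of_forall fun y => ?_)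
      simp [hFA]
    rw [hmap] at h
    exact (integrable_smul_measure (by simp [hdet, hd0]) (by simp)).1 h
  have hFI : ∫ x, F x = |T.det| • A (∫ y, hg m y) := by
    have h := hAemb.integral_map (μ := volume) F
    simp_rw [hFA] at h
    rw [hmap, hAI, integral_smul_measure, hdet, ENNReal.toReal_ofReal (abs_nonneg _)] at h
    rw [← h, smul_smul, ← abs_mul, mul_inv_cancel₀ hd0, abs_one, one_smul]
  have hpol := polar3 F hFi
  have key : ∀ n : Metric.sphere (0 : (EuclideanSpace ℝ (Fin 3))) 1,
      (Set.indicator {p : Metric.sphere (0 : (EuclideanSpace ℝ (Fin 3))) 1 | 0 < ⟪(n₀ : (EuclideanSpace ℝ (Fin 3))), (p : (EuclideanSpace ℝ (Fin 3)))⟫} J n) • (n : (EuclideanSpace ℝ (Fin 3)))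
      = (2 * N) • ∫ r in Set.Ioi (0:ℝ), r ^ 2 • F (r • (n : (EuclideanSpace ℝ (Fin 3)))) := by
    intro n
    have hn : (n : (EuclideanSpace ℝ (Fin 3))) ≠ 0 := by
      intro h; have := n.2; simp [h] at this
    have hBn : B n ≠ 0 := by
      intro h; apply hn; rw [← hAB n, h, map_zero]
    have hq : 0 < ‖B n‖ ^ 2 := by have := norm_pos_iff.2 hBn; positivity
    have hinner : ∀ r : ℝ, ⟪m, B (r • (n : (EuclideanSpace ℝ (Fin 3))))⟫ = r * ⟪(n₀ : (EuclideanSpace ℝ (Fin 3))), (n : (EuclideanSpace ℝ (Fin 3)))⟫ := by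
      intro r
      rw [hm, hAs, hAB, inner_smul_right]
    have hqq : ⟪(n : (EuclideanSpace ℝ (Fin 3))), Matrix.toEuclideanLin (T⁻¹ * T⁻¹) (n : (EuclideanSpace ℝ (Fin 3)))⟫ = ‖B n‖ ^ 2 := by
      rw [hBB, ← hBs, real_inner_self_eq_norm_sq]
    by_cases h : 0 < ⟪(n₀ : (EuclideanSpace ℝ (Fin 3))), (n : (EuclideanSpace ℝ (Fin 3)))⟫
    · have e : ∀ r ∈ Set.Ioi (0:ℝ), r ^ 2 • F (r • (n : (EuclideanSpace ℝ (Fin 3))))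
          = (r ^ 3 * Real.exp (-(‖B n‖ ^ 2) * r ^ 2)) • (n : (EuclideanSpace ℝ (Fin 3))) := by
        intro r hr
        have hr' : (0:ℝ) < r := hr
        have : 0 < ⟪m, B (r • (n : (EuclideanSpace ℝ (Fin 3))))⟫ := by rw [hinner]; positivity
        simp only [hF, hg, if_pos this]
        rw [map_smul A, hAB, smul_smul, smul_smul, map_smul, norm_smul, mul_pow,
          Real.norm_eq_abs, sq_abs]
        congr 1
        rw [show -(r ^ 2 * ‖B n‖ ^ 2) = -(‖B n‖ ^ 2) * r ^ 2 by ring]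
        ring
      rw [setIntegral_congr_fun measurableSet_Ioi e, integral_smul_const, real_moment3 hq,
        Set.indicator_of_mem (by exact h), hJ, hqq, smul_smul]
      congr 1
      field_simp
    · have e : ∀ r ∈ Set.Ioi (0:ℝ), r ^ 2 • F (r • (n : (EuclideanSpace ℝ (Fin 3)))) = 0 := by
        intro r hr
        have hr' : (0:ℝ) < r := hr
        have : ¬ 0 < ⟪m, B (r • (n : (EuclideanSpace ℝ (Fin 3))))⟫ := by
          rw [hinner]; exact fun h' => h (pos_of_mul_pos_right h' hr'.le)
        simp only [hF, hg, if_neg this]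
        simp
      rw [setIntegral_congr_fun measurableSet_Ioi e, Set.indicator_of_notMem (by exact h)]
      simp
  simp_rw [key]
  rw [integral_smul, ← hpol, hFI, hI, map_smul, hAA, ← hm, ← hAs, ← hm,
    real_inner_self_eq_norm_sq, Real.sqrt_sq (norm_nonneg _), smul_smul, smul_smul]
  congr 1
  ring
end

section
/- Let μ be a probability measure on the unit sphere S² ⊆ ℝ³ given by density J(n) = N_T/(nᵀT⁻²n)² plus a central symmetric integrable perturbation v with ∫ v dS = 0 and J + v ≥ 0. Define, for each unit vector n₀, r(n₀) = 2 n₀ᵀ (∫ (J(n)+v(n)) 1_{n₀·n ≥ 0} n dS(n)) / √(n₀ᵀ T² n₀). Then inf_{n₀} r(n₀) ≤ 2π N_T |det T|. -/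
open MeasureTheory RealInnerProductSpace

theorem aux_radial (b : ℝ) (hb : 0 < b) :
    ∫ x in Set.Ioi (0:ℝ), x ^ 3 * Real.exp (-(b * x ^ 2)) = 1 / (2 * b ^ 2) := by
  have h := integral_rpow_mul_exp_neg_mul_rpow (p := 2) (q := 3) (b := b) (by norm_num) (by norm_num) hb
  have e : ∀ x : ℝ, x ^ (3:ℝ) * Real.exp (-b * x ^ (2:ℝ)) = x ^ 3 * Real.exp (-(b * x ^ 2)) := by
    intro x
    rw [show (3:ℝ) = ((3:ℕ):ℝ) by norm_num, show (2:ℝ) = ((2:ℕ):ℝ) by norm_num,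
      Real.rpow_natCast, Real.rpow_natCast, neg_mul]
  simp_rw [e] at h
  rw [h, show (-(3+1)/2 : ℝ) = -((2:ℕ):ℝ) by norm_num, show ((3+1)/2 : ℝ) = 2 by norm_num,
    Real.Gamma_two, Real.rpow_neg hb.le, Real.rpow_natCast]
  field_simp

theorem aux_half : ∫ x : ℝ, max x 0 * Real.exp (-x ^ 2) = 1 / 2 := by
  have h := integral_rpow_mul_exp_neg_mul_rpow (p := 2) (q := 1) (b := 1) (by norm_num) (by norm_num) one_pos
  have e : ∀ x : ℝ, x ^ (1:ℝ) * Real.exp (-1 * x ^ (2:ℝ)) = x * Real.exp (-x ^ 2) := by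
    intro x
    rw [show (2:ℝ) = ((2:ℕ):ℝ) by norm_num, Real.rpow_natCast, Real.rpow_one, neg_one_mul]
  simp_rw [e] at h
  rw [show ((1+1)/2 : ℝ) = 1 by norm_num, Real.Gamma_one, Real.one_rpow] at h
  have : ∀ x : ℝ, max x 0 * Real.exp (-x ^ 2)
      = (Set.Ioi (0:ℝ)).indicator (fun x => x * Real.exp (-x ^ 2)) x := by
    intro x
    by_cases hx : 0 < x
    · simp [Set.indicator, hx, hx.le]
    · simp [Set.indicator, hx, not_lt.mp hx]
  simp_rw [this]
  rw [integral_indicator measurableSet_Ioi, h]; norm_num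

local notation "E3" => EuclideanSpace ℝ (Fin 3)

theorem aux_g0 : ∫ y : E3, max (y 0) 0 * Real.exp (-‖y‖ ^ 2) = Real.pi / 2 := by
  rw [← (PiLp.volume_preserving_toLp (Fin 3)).integral_comp
    (MeasurableEquiv.toLp 2 (Fin 3 → ℝ)).measurableEmbedding]
  have h := integral_fintype_prod_volume_eq_prod (𝕜 := ℝ) (E := fun _ : Fin 3 => ℝ)
    (f := fun i x => (if i = 0 then max x 0 else 1) * Real.exp (-x ^ 2))
  have hg := integral_gaussian 1
  simp only [Fin.prod_univ_three, Fin.isValue, if_true, one_ne_zero, if_false, one_mul, aux_half,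
    show (2 : Fin 3) ≠ 0 by decide] at h
  simp only [neg_mul, one_mul, div_one] at hg
  rw [hg, mul_assoc, Real.mul_self_sqrt Real.pi_pos.le] at h
  rw [show Real.pi / 2 = 1 / 2 * Real.pi by ring, ← h]
  congr 1
  ext x
  rw [EuclideanSpace.norm_sq_eq, Fin.sum_univ_three]
  simp only [Real.norm_eq_abs, sq_abs, neg_add, Real.exp_add]
  ring

theorem aux_g1 (w : E3) :
    ∫ y : E3, max ⟪y, w⟫ 0 * Real.exp (-‖y‖ ^ 2) = Real.pi / 2 * ‖w‖ := by
  by_cases hw : w = 0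
  · simp [hw]
  have hw' : 0 < ‖w‖ := norm_pos_iff.mpr hw
  obtain ⟨b, hb⟩ := Orthonormal.exists_orthonormalBasis_extension_of_card_eq (𝕜 := ℝ) (E := E3)
    (ι := Fin 3) (by simp) (v := fun _ => ‖w‖⁻¹ • w) (s := {0}) (by
      constructor
      · intro i; simp [norm_smul, hw'.ne']
      · intro i j hij; exact absurd (Subsingleton.elim i j) hij)
  have hb0 := hb 0 rfl
  have hmp := b.repr.measurePreserving
  have := hmp.integral_comp b.repr.toHomeomorph.measurableEmbedding
    (fun y : E3 => ‖w‖ * (max (y 0) 0 * Real.exp (-‖y‖ ^ 2)))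
  rw [mul_comm, ← aux_g0, ← integral_const_mul, ← this]
  congr 1
  ext y
  rw [b.repr.norm_map, b.repr_apply_apply, hb0, ← mul_assoc]
  congr 1
  rw [mul_max_of_nonneg _ _ hw'.le, mul_zero, real_inner_smul_left, ← mul_assoc,
    mul_inv_cancel₀ hw'.ne', one_mul, real_inner_comm]

theorem aux_g2 (L A : E3 →ₗ[ℝ] E3) (hLA : ∀ x, L (A x) = x)
    (hL : L.IsSymmetric) (u : E3) :
    ∫ x : E3, max ⟪x, u⟫ 0 * Real.exp (-‖A x‖ ^ 2)
      = |LinearMap.det L| * (Real.pi / 2 * ‖L u‖) := by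
  have hd : LinearMap.det L * LinearMap.det A = 1 := by
    rw [← LinearMap.det_comp, show L ∘ₗ A = LinearMap.id from LinearMap.ext hLA, LinearMap.det_id]
  have hA0 : LinearMap.det A ≠ 0 := right_ne_zero_of_mul_eq_one hd
  have hinv : (LinearMap.det A)⁻¹ = LinearMap.det L := (eq_inv_of_mul_eq_one_left hd).symm
  have hm := Measure.map_linearMap_addHaar_eq_smul_addHaar (volume : Measure E3) hA0
  have hcont : Continuous A := A.continuous_of_finiteDimensional
  have h := integral_map (μ := (volume : Measure E3)) (φ := A) hcont.aemeasurable
    (f := fun y : E3 => max ⟪y, L u⟫ 0 * Real.exp (-‖y‖ ^ 2))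
    (by apply Continuous.aestronglyMeasurable; fun_prop)
  rw [hm, integral_smul_measure, aux_g1, hinv, ENNReal.toReal_ofReal (abs_nonneg _),
    smul_eq_mul] at h
  rw [h]
  congr 1
  ext x
  rw [← hL, hLA]

theorem aux_polar (L A : E3 →ₗ[ℝ] E3) (hAL : ∀ x, A (L x) = x) (hLA : ∀ x, L (A x) = x)
    (hL : L.IsSymmetric) (u : E3) :
    ∫ m : Metric.sphere (0 : E3) 1, max ⟪(m : E3), u⟫ 0 * (1 / (2 * (‖A m‖ ^ 2) ^ 2))
       ∂(volume : Measure E3).toSphere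
      = |LinearMap.det L| * (Real.pi / 2 * ‖L u‖) := by
  by_cases hu : u = 0
  · simp [hu]
  have hg := aux_g2 L A hLA hL u
  have hd : LinearMap.det L * LinearMap.det A = 1 := by
    rw [← LinearMap.det_comp, show L ∘ₗ A = LinearMap.id from LinearMap.ext hLA, LinearMap.det_id]
  have hL0 : LinearMap.det L ≠ 0 := left_ne_zero_of_mul_eq_one hd
  have hLu : L u ≠ 0 := fun h => hu (by rw [← hAL u, h, map_zero])
  have hne : |LinearMap.det L| * (Real.pi / 2 * ‖L u‖) ≠ 0 := by
    have := norm_pos_iff.mpr hLu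
    have := abs_pos.mpr hL0
    positivity
  have hmp := (volume : Measure E3).measurePreserving_homeomorphUnitSphereProd
  have hdim : Module.finrank ℝ E3 - 1 = 2 := by simp
  rw [hdim] at hmp
  have hsub := integral_subtype_comap (μ := (volume : Measure E3))
    (measurableSet_singleton (0:E3)).compl
    (fun x : E3 => max ⟪x, u⟫ 0 * Real.exp (-‖A x‖ ^ 2))
  rw [restrict_compl_singleton, hg] at hsub
  let F : Metric.sphere (0 : E3) 1 × Set.Ioi (0:ℝ) → ℝ := fun p =>
    max ⟪(p.2 : ℝ) • (p.1 : E3), u⟫ 0 * Real.exp (-‖A ((p.2 : ℝ) • (p.1 : E3))‖ ^ 2)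
  have hF := hmp.integral_comp (Homeomorph.measurableEmbedding _) F
  have hFx : ∀ x : ({0}ᶜ : Set E3), F (homeomorphUnitSphereProd E3 x)
      = max ⟪(x : E3), u⟫ 0 * Real.exp (-‖A (x : E3)‖ ^ 2) := by
    intro x
    have hx : ‖(x : E3)‖ ≠ 0 := norm_ne_zero_iff.mpr x.2
    simp [F, smul_smul, hx]
  simp_rw [hFx] at hF
  rw [hF] at hsub
  have hint : Integrable F ((volume : Measure E3).toSphere.prod (Measure.volumeIoiPow 2)) :=
    Integrable.of_integral_ne_zero (by rw [hsub]; exact hne)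
  rw [integral_prod _ hint] at hsub
  rw [← hsub]
  congr 1
  ext m
  have hAm : 0 < ‖A m‖ ^ 2 := by
    have : A m ≠ 0 := fun h => by
      have h1 := hLA m
      rw [h, map_zero] at h1
      have := norm_eq_of_mem_sphere m
      rw [← h1] at this; simp at this
    have := norm_pos_iff.mpr this
    positivity
  rw [← aux_radial _ hAm, Measure.volumeIoiPow]
  simp only [ENNReal.ofReal]
  rw [integral_withDensity_eq_integral_smul,
    integral_subtype_comap measurableSet_Ioi
      (fun a : ℝ => Real.toNNReal (a ^ 2) • (max ⟪a • (m : E3), u⟫ 0 * Real.exp (-‖A (a • (m : E3))‖ ^ 2))),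
    ← integral_const_mul]
  · refine setIntegral_congr_fun measurableSet_Ioi fun x hx ↦ ?_
    have hx : 0 < x := hx
    rw [NNReal.smul_def, Real.coe_toNNReal _ (by positivity), map_smul, norm_smul, mul_pow,
      real_inner_smul_left, Real.norm_eq_abs, sq_abs, smul_eq_mul,
      show max (x * ⟪(m:E3), u⟫) 0 = x * max ⟪(m:E3), u⟫ 0 by
        rw [mul_max_of_nonneg _ _ hx.le, mul_zero], mul_comm (x^2) (‖A m‖^2)]
    ring
  · exact (measurable_subtype_coe.pow_const _).real_toNNReal

theorem stmt9 (T : Matrix (Fin 3) (Fin 3) ℝ) (hT : IsUnit T.det) (hTsymm : T.IsSymm)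
    (N : ℝ) (hN : 0 < N)
    (dS : Measure (Metric.sphere (0 : EuclideanSpace ℝ (Fin 3)) 1))
    (hdS : dS = (volume : Measure (EuclideanSpace ℝ (Fin 3))).toSphere)
    (J : Metric.sphere (0 : EuclideanSpace ℝ (Fin 3)) 1 → ℝ)
    (hJ : ∀ n, J n = N / (⟪(n : EuclideanSpace ℝ (Fin 3)),
        Matrix.toEuclideanLin (T⁻¹ * T⁻¹) (n : EuclideanSpace ℝ (Fin 3))⟫)^2)
    (hnorm : ∫ n, J n ∂dS = 1)
    (v : Metric.sphere (0 : EuclideanSpace ℝ (Fin 3)) 1 → ℝ)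
    (hvint : Integrable v dS)
    (hvsymm : ∀ n, v (-n) = v n)
    (hv0 : ∫ n, v n ∂dS = 0)
    (hpos : ∀ n, 0 ≤ J n + v n)
    (r : Metric.sphere (0 : EuclideanSpace ℝ (Fin 3)) 1 → ℝ)
    (hr : ∀ n₀, r n₀ = 2 * ⟪(n₀ : EuclideanSpace ℝ (Fin 3)),
        ∫ n, (Set.indicator
            {p : Metric.sphere (0 : EuclideanSpace ℝ (Fin 3)) 1 |
              0 ≤ ⟪(n₀ : EuclideanSpace ℝ (Fin 3)), (p : EuclideanSpace ℝ (Fin 3))⟫}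
            (fun p => J p + v p) n) • (n : EuclideanSpace ℝ (Fin 3)) ∂dS⟫ /
        Real.sqrt (⟪(n₀ : EuclideanSpace ℝ (Fin 3)),
          Matrix.toEuclideanLin (T * T) (n₀ : EuclideanSpace ℝ (Fin 3))⟫)) :
    (⨅ n₀, r n₀) ≤ 2 * Real.pi * N * |T.det| := by
  subst hdS
  set L : E3 →ₗ[ℝ] E3 := Matrix.toEuclideanLin T with hLdef
  set A : E3 →ₗ[ℝ] E3 := Matrix.toEuclideanLin T⁻¹ with hAdef
  have hmul : ∀ (P Q : Matrix (Fin 3) (Fin 3) ℝ) (x : E3), Matrix.toEuclideanLin (P * Q) x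
      = Matrix.toEuclideanLin P (Matrix.toEuclideanLin Q x) := by
    intro P Q x
    simp [Matrix.toEuclideanLin_apply, Matrix.mulVec_mulVec]
  have hone : ∀ x : E3, Matrix.toEuclideanLin (1 : Matrix (Fin 3) (Fin 3) ℝ) x = x := by
    intro x
    simp [Matrix.toEuclideanLin_apply]
  have hLA : ∀ x, L (A x) = x := by
    intro x; rw [← hmul, Matrix.mul_nonsing_inv _ hT, hone]
  have hAL : ∀ x, A (L x) = x := by
    intro x; rw [← hmul, Matrix.nonsing_inv_mul _ hT, hone]
  have hLs : L.IsSymmetric := by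
    rw [hLdef, Matrix.isSymmetric_toEuclideanLin_iff, Matrix.IsHermitian,
      Matrix.conjTranspose_eq_transpose_of_trivial]
    exact hTsymm
  have hAs : A.IsSymmetric := by
    intro x y
    conv_lhs => rw [← hLA y]
    rw [← hLs, hLA]
  have hdet : LinearMap.det L = T.det := by
    rw [hLdef, Matrix.toEuclideanLin_eq_toLin, LinearMap.det_toLin]
  have hJ' : ∀ n, J n = N / (‖A n‖ ^ 2) ^ 2 := by
    intro n
    rw [hJ, hmul, ← hAs, real_inner_self_eq_norm_sq]
  have hJint : Integrable J (volume : Measure E3).toSphere :=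
    Integrable.of_integral_ne_zero (by rw [hnorm]; exact one_ne_zero)
  have hfint : Integrable (fun n => J n + v n) (volume : Measure E3).toSphere := hJint.add hvint
  have hr' : ∀ n₀, r n₀ = 2 * (∫ n : Metric.sphere (0 : E3) 1,
      (J n + v n) * max ⟪(n₀ : E3), (n : E3)⟫ 0 ∂(volume : Measure E3).toSphere) / ‖L n₀‖ := by
    intro n₀
    rw [hr, hmul, ← hLs, real_inner_self_eq_norm_sq, Real.sqrt_sq (norm_nonneg _)]
    have hms : MeasurableSet {p : Metric.sphere (0 : E3) 1 | 0 ≤ ⟪(n₀ : E3), (p : E3)⟫} := by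
      apply IsClosed.measurableSet
      exact isClosed_le continuous_const (by fun_prop)
    have hi := (hfint.indicator hms).smul_bdd (f := fun n : Metric.sphere (0 : E3) 1 => (n : E3)) 1
      (by apply Continuous.aestronglyMeasurable; fun_prop)
      (Filter.Eventually.of_forall fun n => (norm_eq_of_mem_sphere n).le)
    have hi2 := integral_inner (𝕜 := ℝ) hi (n₀ : E3)
    simp only [Pi.smul_apply'] at hi2
    rw [← hi2]
    congr 3
    ext n
    rw [real_inner_smul_right]
    by_cases hn : 0 ≤ ⟪(n₀ : E3), (n : E3)⟫
    · rw [Set.indicator_of_mem (by exact hn), max_eq_left hn]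
    · rw [Set.indicator_of_notMem (by exact hn), max_eq_right (not_le.mp hn).le]
      simp
  have hr0 : ∀ n₀, 0 ≤ r n₀ := by
    intro n₀
    rw [hr']
    refine div_nonneg (mul_nonneg zero_le_two (integral_nonneg fun n => ?_)) (norm_nonneg _)
    exact mul_nonneg (hpos n) (le_max_right _ _)
  have hbdd : BddBelow (Set.range r) := ⟨0, by rintro _ ⟨x, rfl⟩; exact hr0 x⟩
  -- pointwise bound along the transported directions
  have hI : ∀ m : Metric.sphere (0 : E3) 1, (⨅ n₀, r n₀) ≤
      2 * (∫ n : Metric.sphere (0 : E3) 1, (J n + v n) * max ⟪A m, (n : E3)⟫ 0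
        ∂(volume : Measure E3).toSphere) := by
    intro m
    have hAm : A m ≠ 0 := fun h => by
      have h1 := hLA m
      rw [h, map_zero] at h1
      have := norm_eq_of_mem_sphere m
      rw [← h1] at this; simp at this
    have hpos' := norm_pos_iff.mpr hAm
    let n₀ : Metric.sphere (0 : E3) 1 := ⟨‖A m‖⁻¹ • A m, by simp [norm_smul, hpos'.ne']⟩
    refine (ciInf_le hbdd n₀).trans (le_of_eq ?_)
    have hn : (n₀ : E3) = ‖A m‖⁻¹ • A m := rfl
    rw [hr', hn, map_smul, hLA, norm_smul, norm_eq_of_mem_sphere m, mul_one, norm_inv, norm_norm,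
      div_inv_eq_mul, mul_assoc, mul_comm _ ‖A m‖, ← integral_const_mul]
    congr 2
    ext n
    rw [real_inner_smul_left, ← mul_zero (‖A m‖⁻¹), ← mul_max_of_nonneg _ _ (by positivity),
      mul_zero]
    field_simp
  have hAc : Continuous A := A.continuous_of_finiteDimensional
  let K : Metric.sphere (0 : E3) 1 × Metric.sphere (0 : E3) 1 → ℝ :=
    fun p => max ⟪A p.1, (p.2 : E3)⟫ 0
  have hK : Continuous K := by fun_prop
  obtain ⟨C, hC⟩ := isCompact_univ.exists_bound_of_continuousOn hK.continuousOn
  have hprod : Integrable (fun p : Metric.sphere (0 : E3) 1 × Metric.sphere (0 : E3) 1 =>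
      K p * (J p.1 * (J p.2 + v p.2)))
      ((volume : Measure E3).toSphere.prod (volume : Measure E3).toSphere) :=
    (hJint.mul_prod hfint).bdd_mul hK.aestronglyMeasurable
      (Filter.Eventually.of_forall fun p => hC p (Set.mem_univ _))
  have hJ0 : ∀ m, 0 ≤ J m := fun m => by rw [hJ']; positivity
  have hswap := integral_integral_swap (f := fun m n : Metric.sphere (0 : E3) 1 =>
      K (m, n) * (J m * (J n + v n))) hprod
  have hin : ∀ n : Metric.sphere (0 : E3) 1,
      ∫ m, K (m, n) * (J m * (J n + v n)) ∂(volume : Measure E3).toSphere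
        = (J n + v n) * (N * Real.pi * |T.det|) := by
    intro n
    have h := aux_polar L A hAL hLA hLs (A n)
    rw [hLA, norm_eq_of_mem_sphere n, hdet] at h
    rw [show (J n + v n) * (N * Real.pi * |T.det|)
      = ((J n + v n) * (2 * N)) * (|T.det| * (Real.pi / 2 * 1)) by ring, ← h, ← integral_const_mul]
    congr 1
    ext m
    rw [hJ' m, ← hAs]
    simp only [K]
    field_simp
  have htot : ∫ n, (J n + v n) ∂(volume : Measure E3).toSphere = 1 := by
    rw [integral_add hJint hvint, hnorm, hv0, add_zero]
  simp_rw [hin] at hswap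
  rw [integral_mul_const, htot, one_mul] at hswap
  calc (⨅ n₀, r n₀) = ∫ m, J m * (⨅ n₀, r n₀) ∂(volume : Measure E3).toSphere := by
        rw [integral_mul_const, hnorm, one_mul]
    _ ≤ ∫ m, 2 * ∫ n, K (m, n) * (J m * (J n + v n)) ∂(volume : Measure E3).toSphere
          ∂(volume : Measure E3).toSphere := by
        refine integral_mono (hJint.mul_const _) (hprod.integral_prod_left.const_mul 2) fun m => ?_
        refine (mul_le_mul_of_nonneg_left (hI m) (hJ0 m)).trans (le_of_eq ?_)
        rw [mul_left_comm, ← integral_const_mul]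
        congr 2
        ext n
        simp only [K]
        ring
    _ = 2 * Real.pi * N * |T.det| := by
        rw [integral_const_mul, hswap]; ring
end
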